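/- Let v : [0,T] → ℝ be absolutely continuous and let 0 < α < 1. Then for almost every t ∈ [0,T], v(t) · (ᶜD₀ₜ^α v)(t) ≥ (1/2) (ᶜD₀ₜ^α v²)(t), where ᶜD₀ₜ^α denotes the left Caputo fractional derivative (ᶜD₀ₜ^α w)(t) = (1/Γ(1-α)) ∫₀ᵗ w'(τ)/(t-τ)^α dτ. -/

import Mathlib

open MeasureTheory intervalIntegral

/-- The left Caputo fractional derivative of order `α ∈ (0,1)`:
`(ᶜD₀ₜ^α w)(t) = (1/Γ(1-α)) ∫₀ᵗ w'(τ) (t-τ)^(-α) dτ`. -/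
noncomputable def caputoDeriv (α : ℝ) (w : ℝ → ℝ) (t : ℝ) : ℝ :=
  (1 / Real.Gamma (1 - α)) * ∫ τ in (0:ℝ)..t, deriv w τ * (t - τ) ^ (-α)

/-- The singular convolution defining the Caputo derivative converges absolutely for almost
every `t`. -/
lemma ae_intervalIntegrable_mul_sub_rpow_neg {T α : ℝ} (hT : 0 ≤ T) (hα1 : α < 1) {f : ℝ → ℝ}
    (hf : IntervalIntegrable f volume 0 T) :
    ∀ᵐ t, t ∈ Set.Icc (0:ℝ) T →
      IntervalIntegrable (fun τ => f τ * (t - τ) ^ (-α)) volume 0 t := by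
  have hF : Integrable ((Set.Ioc 0 T).indicator f) volume := by
    rw [integrable_indicator_iff measurableSet_Ioc]
    exact (intervalIntegrable_iff_integrableOn_Ioc_of_le hT).1 hf
  have hK : Integrable ((Set.Icc 0 T).indicator fun x : ℝ => x ^ (-α)) volume := by
    rw [integrable_indicator_iff measurableSet_Icc]
    exact (intervalIntegrable_iff_integrableOn_Icc_of_le hT).1
      (intervalIntegral.intervalIntegrable_rpow' (by linarith))
  filter_upwards [hF.ae_convolution_exists (ContinuousLinearMap.mul ℝ ℝ) hK] with t ht htT
  rw [intervalIntegrable_iff_integrableOn_Ioc_of_le htT.1]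
  refine (ht.integrable.integrableOn (s := Set.Ioc 0 t)).congr_fun (fun τ hτ => ?_)
    measurableSet_Ioc
  have h1 : τ ∈ Set.Ioc 0 T := ⟨hτ.1, hτ.2.trans htT.2⟩
  have h2 : t - τ ∈ Set.Icc 0 T := ⟨by linarith [hτ.2], by linarith [hτ.1, htT.2]⟩
  simp [Set.indicator_of_mem h1, Set.indicator_of_mem h2]

/-- At a point of differentiability, the squared increment beats the singular kernel. -/
lemma continuousWithinAt_sq_sub_mul_rpow_neg {α t : ℝ} (hα1 : α < 1) {v : ℝ → ℝ}
    (hv : DifferentiableAt ℝ v t) :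
    ContinuousWithinAt (fun s => (v t - v s) ^ 2 * (t - s) ^ (-α)) (Set.Iic t) t := by
  have h1 : ContinuousAt (fun s => dslope v t s ^ 2 * (t - s) ^ (2 - α)) t := by
    refine ((continuousAt_dslope_same.2 hv).pow 2).mul ?_
    exact (continuousAt_const.sub continuousAt_id).rpow_const (Or.inr (by linarith))
  have key : ∀ s ∈ Set.Iic t,
      (v t - v s) ^ 2 * (t - s) ^ (-α) = dslope v t s ^ 2 * (t - s) ^ (2 - α) := by
    intro s hs
    rcases (Set.mem_Iic.1 hs).eq_or_lt with rfl | hlt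
    · simp [Real.zero_rpow (show 2 - α ≠ 0 by linarith)]
    · have h := sub_smul_dslope v t s
      rw [smul_eq_mul] at h
      have hpow : (t - s) ^ (2 - α) = (t - s) ^ 2 * (t - s) ^ (-α) := by
        rw [sub_eq_add_neg 2 α, Real.rpow_add (sub_pos.2 hlt), Real.rpow_two]
      rw [hpow, ← neg_sub (v s), ← h]
      ring
  exact h1.continuousWithinAt.congr key (key t Set.self_mem_Iic)

/-- Weighting the derivative of `-(v t - v ·) ^ 2 / 2` by the increasing kernel
`(t - ·) ^ (-α)` gives a nonnegative integral. -/
lemma integral_sub_mul_deriv_mul_rpow_neg_nonneg {α t : ℝ} (hα0 : 0 < α) (hα1 : α < 1)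
    (ht : 0 ≤ t) {v v' : ℝ → ℝ} (hv : ∀ s ∈ Set.Icc 0 t, HasDerivAt v (v' s) s)
    (hint : IntervalIntegrable (fun s => (v t - v s) * (v' s * (t - s) ^ (-α))) volume 0 t) :
    0 ≤ ∫ s in (0:ℝ)..t, (v t - v s) * (v' s * (t - s) ^ (-α)) := by
  have hcont : ContinuousOn (fun s => -((v t - v s) ^ 2 * (t - s) ^ (-α))) (Set.Icc 0 t) := by
    intro s hs
    rcases hs.2.eq_or_lt with rfl | hlt
    · exact ((continuousWithinAt_sq_sub_mul_rpow_neg hα1 (hv s hs).differentiableAt).mono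
        Set.Icc_subset_Iic_self).neg
    · refine ContinuousAt.continuousWithinAt (ContinuousAt.neg (ContinuousAt.mul ?_ ?_))
      · exact (continuousAt_const.sub (hv s hs).continuousAt).pow 2
      · exact (continuousAt_const.sub continuousAt_id).rpow_const
          (Or.inl (sub_pos.2 hlt).ne')
  have hder : ∀ s ∈ Set.Ioo 0 t, HasDerivAt (fun s => -((v t - v s) ^ 2 * (t - s) ^ (-α)))
      (2 * ((v t - v s) * (v' s * (t - s) ^ (-α)))
        - (v t - v s) ^ 2 * (α * (t - s) ^ (-α - 1))) s := by
    intro s hs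
    have h1 := ((hv s (Set.Ioo_subset_Icc_self hs)).const_sub (v t)).pow 2
    have h2 := ((hasDerivAt_id s).const_sub t).rpow_const (p := -α)
      (Or.inl (sub_pos.2 hs.2).ne')
    refine (h1.mul h2).neg.congr_deriv ?_
    simp
    ring
  have h := sub_le_integral_of_hasDeriv_right_of_le ht hcont
    (fun s hs => (hder s hs).hasDerivWithinAt)
    ((intervalIntegrable_iff_integrableOn_Icc_of_le ht).1 (hint.const_mul 2))
    (fun s hs => sub_le_self _ (by have := sub_pos.2 hs.2; positivity))
  have h0 : 0 ≤ (v t - v 0) ^ 2 * (t - 0) ^ (-α) :=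
    mul_nonneg (sq_nonneg _) (Real.rpow_nonneg (by linarith) _)
  rw [intervalIntegral.integral_const_mul] at h
  simp only [sub_self, ne_eq, OfNat.ofNat_ne_zero, not_false_eq_true, zero_pow, zero_mul] at h
  linarith

/-- For an absolutely continuous `v` on `[0,T]` (represented by a locally integrable
derivative `v'` with `v t = v 0 + ∫₀ᵗ v'`) and `0 < α < 1`, for almost every
`t ∈ [0,T]` one has `v(t) · (ᶜD₀ₜ^α v)(t) ≥ (1/2) (ᶜD₀ₜ^α v²)(t)`. -/
theorem caputo_chain_inequality (T α : ℝ) (hT : 0 < T) (hα0 : 0 < α) (hα1 : α < 1)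
    (v v' : ℝ → ℝ)
    (hderiv : ∀ t ∈ Set.Icc (0:ℝ) T, HasDerivAt v (v' t) t)
    (hint : IntervalIntegrable v' volume 0 T) :
    ∀ᵐ t ∂(volume.restrict (Set.Icc (0:ℝ) T)),
      v t * caputoDeriv α v t ≥ (1 / 2) * caputoDeriv α (fun s => (v s) ^ 2) t := by
  rw [ae_restrict_iff' measurableSet_Icc]
  filter_upwards [ae_intervalIntegrable_mul_sub_rpow_neg hT.le hα1 hint] with t hk ht
  have hI := hk ht
  have hv : ∀ s ∈ Set.Icc 0 t, HasDerivAt v (v' s) s := fun s hs =>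
    hderiv s ⟨hs.1, hs.2.trans ht.2⟩
  have hvc : ContinuousOn v (Set.uIcc 0 t) := by
    rw [Set.uIcc_of_le ht.1]
    exact fun s hs => (hv s hs).continuousAt.continuousWithinAt
  have hvI := hI.continuousOn_mul hvc
  have hpos := integral_sub_mul_deriv_mul_rpow_neg_nonneg hα0 hα1 ht.1 hv
    (hI.continuousOn_mul (continuousOn_const.sub hvc))
  have h1 : ∫ s in (0:ℝ)..t, deriv v s * (t - s) ^ (-α)
      = ∫ s in (0:ℝ)..t, v' s * (t - s) ^ (-α) := by
    refine integral_congr fun s hs => ?_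
    rw [Set.uIcc_of_le ht.1] at hs
    simp only [(hv s hs).deriv]
  have h2 : ∫ s in (0:ℝ)..t, deriv (fun s => v s ^ 2) s * (t - s) ^ (-α)
      = 2 * ∫ s in (0:ℝ)..t, v s * (v' s * (t - s) ^ (-α)) := by
    rw [← intervalIntegral.integral_const_mul]
    refine integral_congr fun s hs => ?_
    rw [Set.uIcc_of_le ht.1] at hs
    have hd : deriv (fun s => v s ^ 2) s = 2 * v s * v' s := by
      simpa using ((hv s hs).fun_pow 2).deriv
    simp only [hd]
    ring
  simp only [sub_mul] at hpos
  rw [intervalIntegral.integral_sub (hI.const_mul _) hvI,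
    intervalIntegral.integral_const_mul] at hpos
  have hG : 0 ≤ 1 / Real.Gamma (1 - α) :=
    one_div_nonneg.2 (Real.Gamma_pos_of_pos (by linarith)).le
  rw [caputoDeriv, caputoDeriv, h1, h2]
  linarith [mul_nonneg hG hpos]
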